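/- arXiv:2106.11194 — 2 statements merged into one kernel-verified Lean document; each statement's English description precedes it below -/
import Mathlib

section
/- (Theorem 2.2.) Assume p := Σ_{j=1}^m p_j > δ and let K > 0 satisfy Σ_j p_j e^{−a_j K} = δ. If limsup_{t→∞} Σ_{j=1}^m a_j p_j e^{−a_j K} ∫_{t−σ_j(t)}^{t} β(s) ds < (Σ_{j=1}^m a_j p_j e^{−a_j K}) / (2δ + K Σ_{j=1}^m a_j p_j e^{−a_j K}), then K is locally exponentially stable: there exist ε > 0, M ≥ 1 and λ > 0 such that every solution x of the Nicholson equation with admissible initial data satisfying sup_{s∈[t₀−τ,t₀]} |x(s) − K| ≤ ε obeys |x(t) − K| ≤ M e^{−λ(t−t₀)} sup_{s∈[t₀−τ,t₀]} |x(s) − K| for all t ≥ t₀. -/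
/-- A solution of the Nicholson equation
`x'(t) = β(t)(Σ_j p_j x(t−τ_j(t)) e^{−a_j x(t−σ_j(t))} − δ x(t))`, `t ≥ t₀`,
defined on `[t₀ − τbar, ∞)`, with admissible initial data. -/
def NicholsonSolution (m : ℕ) (p a : Fin m → ℝ) (δ t₀ τbar : ℝ)
    (β : ℝ → ℝ) (τ σ : Fin m → ℝ → ℝ) (x : ℝ → ℝ) : Prop :=
  ContinuousOn x (Set.Ici (t₀ - τbar)) ∧
  (∀ t ∈ Set.Ici t₀, HasDerivWithinAt x
      (β t * ((∑ j, p j * x (t - τ j t) * Real.exp (-(a j) * x (t - σ j t))) - δ * x t))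
      (Set.Ici t₀) t) ∧
  (∀ s, t₀ - τbar ≤ s → s < t₀ → 0 ≤ x s) ∧
  0 < x t₀

/-!
Put `b j = p j * exp (-a j * K)`, `c j = K * a j * b j`, `δ = ∑ j, b j` and `C = ∑ j, c j`. To first
order `y = x - K` satisfies `y' = β (∑ j, (b j y(t - τ j) - c j y(t - σ j)) - δ y)`. Replacing
`y(t - σ j)` by `y(t)` turns this into `y' + β (δ + C) y = β (∑ j, b j y(t - τ j) + e)`, where `e`
consists of the increments of `y` over the delays `σ`, weighted by `c j`. As `|y'|` is at most
`β (2 δ + C) sup |y|`, these cost at most `(2 δ + C) (∑ j, c j ∫ β) sup |y|`, which the limsup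
condition eventually makes smaller than `C sup |y|`. The damping then strictly dominates the delayed
terms, with room for the nonlinear remainder, and such a Halanay inequality forces exponential decay
from some time `T` on. Up to `T` solutions grow at most exponentially, so small initial data are
still small at time `T`.
-/

section Halanay

open Set Filter Topology Real

lemma nonneg_of_hasDerivWithinAt_Iio_of_le {f : ℝ → ℝ} {f' a t : ℝ} (hat : a < t)
    (hf : HasDerivWithinAt f f' (Iio t) t) (hle : ∀ s ∈ Ioo a t, f s ≤ f t) : 0 ≤ f' := by
  refine ge_of_tendsto ((hasDerivWithinAt_iff_tendsto_slope' self_notMem_Iio).1 hf) ?_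
  filter_upwards [Ioo_mem_nhdsLT hat] with s hs
  rw [slope_comm, slope_nonneg_iff_of_le hs.2.le]
  exact hle s hs

lemma exists_first_eq_of_lt_of_le {f g : ℝ → ℝ} {a b : ℝ} (hab : a ≤ b)
    (hf : ContinuousOn f (Icc a b)) (hg : ContinuousOn g (Icc a b))
    (ha : f a < g a) (hb : g b ≤ f b) :
    ∃ t ∈ Ioc a b, f t = g t ∧ ∀ s ∈ Ico a t, f s < g s := by
  have meet_before : ∀ s ∈ Icc a b, g s ≤ f s → ∃ u ∈ Icc a s, f u - g u = 0 := fun s hs hgf ↦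
    intermediate_value_Icc hs.1 ((hf.sub hg).mono (Icc_subset_Icc_right hs.2))
      ⟨sub_nonpos.2 ha.le, sub_nonneg.2 hgf⟩
  have meet_compact : IsCompact (Icc a b ∩ (fun t ↦ f t - g t) ⁻¹' {0}) :=
    isCompact_Icc.of_isClosed_subset
      ((hf.sub hg).preimage_isClosed_of_isClosed isClosed_Icc isClosed_singleton)
      inter_subset_left
  obtain ⟨u, hu, hfgu⟩ := meet_before b ⟨hab, le_rfl⟩ hb
  obtain ⟨t, ⟨ht, hfgt⟩, ht_least⟩ := meet_compact.exists_isLeast ⟨u, hu, hfgu⟩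
  have heq : f t = g t := sub_eq_zero.1 hfgt
  refine ⟨t, ⟨ht.1.lt_of_ne ?_, ht.2⟩, heq, fun s hs ↦ ?_⟩
  · rintro rfl
    exact ha.ne heq
  · by_contra! hgf
    obtain ⟨v, hv, hfgv⟩ := meet_before s ⟨hs.1, hs.2.le.trans ht.2⟩ hgf
    exact hs.2.not_ge ((ht_least ⟨⟨hv.1, hv.2.trans (hs.2.le.trans ht.2)⟩, hfgv⟩).trans hv.2)

lemma abs_lt_of_forall_deriv_lt_of_abs_eq {y w y' w' : ℝ → ℝ} {a b : ℝ}
    (hyc : ContinuousOn y (Icc a b)) (hwc : ContinuousOn w (Icc a b))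
    (hy : ∀ t ∈ Ioc a b, HasDerivWithinAt y (y' t) (Iio t) t)
    (hw : ∀ t ∈ Ioc a b, HasDerivWithinAt w (w' t) (Iio t) t) (ha : |y a| < w a)
    (hcross : ∀ t ∈ Ioc a b, (∀ s ∈ Icc a t, |y s| ≤ w s) →
      (y t = w t → y' t < w' t) ∧ (y t = -w t → -y' t < w' t)) :
    ∀ t ∈ Icc a b, |y t| < w t := by
  by_contra! ⟨b', hb', hwy⟩
  obtain ⟨t, ht, heq, hbefore⟩ := exists_first_eq_of_lt_of_le hb'.1
    (hyc.abs.mono (Icc_subset_Icc_right hb'.2)) (hwc.mono (Icc_subset_Icc_right hb'.2)) ha hwy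
  replace ht : t ∈ Ioc a b := Ioc_subset_Ioc_right hb'.2 ht
  have hpast : ∀ s ∈ Icc a t, |y s| ≤ w s := fun s hs ↦
    hs.2.lt_or_eq.elim (fun h ↦ (hbefore s ⟨hs.1, h⟩).le) fun h ↦ h ▸ heq.le
  obtain ⟨hup, hdown⟩ := hcross t ht hpast
  rcases abs_choice (y t) with h | h
  · have htop : y t = w t := h ▸ heq
    have hrise : 0 ≤ y' t - w' t := nonneg_of_hasDerivWithinAt_Iio_of_le ht.1
      ((hy t ht).sub (hw t ht)) fun s hs ↦ by
        have := le_of_abs_le (hpast s ⟨hs.1.le, hs.2.le⟩)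
        simp only [Pi.sub_apply]; linarith
    linarith [hup htop]
  · have hbot : y t = -w t := by linarith
    have hfall : 0 ≤ -y' t - w' t := nonneg_of_hasDerivWithinAt_Iio_of_le ht.1
      ((hy t ht).neg.sub (hw t ht)) fun s hs ↦ by
        have := neg_le_of_abs_le (hpast s ⟨hs.1.le, hs.2.le⟩)
        simp only [Pi.sub_apply, Pi.neg_apply]; linarith
    linarith [hdown hbot]

/-- Halanay's delay differential inequality `|y' + α y| ≤ κ sup_{[t - h, t]} |y|` at the times
`t ∈ J`, where `y'` is the derivative of `y`. It is imposed only while the supremum is at most `r`,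
so that it can express a property of a nonlinear equation near an equilibrium; any upper bound `S`
may play the role of the supremum. -/
def HalanayOn (y y' α κ : ℝ → ℝ) (h r : ℝ) (J : Set ℝ) : Prop :=
  ∀ t ∈ J, HasDerivAt y (y' t) t ∧ ∀ S ≤ r, (∀ s ∈ Icc (t - h) t, |y s| ≤ S) →
    |y' t + α t * y t| ≤ κ t * S

namespace HalanayOn

variable {y y' α κ : ℝ → ℝ} {h r : ℝ} {J : Set ℝ}

lemma mono {J' : Set ℝ} (H : HalanayOn y y' α κ h r J) (hJ : J' ⊆ J) :
    HalanayOn y y' α κ h r J' :=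
  fun t ht ↦ H t (hJ ht)

lemma abs_lt_exp {a b N μ E : ℝ} (H : HalanayOn y y' α κ h r (Ioc a b)) (hh : 0 ≤ h)
    (hyc : ContinuousOn y (Icc a b)) (hN : ∀ s ∈ Icc (a - h) a, |y s| < N)
    (hE : ∀ s ∈ Icc (-h) 0, exp (μ * s) ≤ E)
    (hr : ∀ t ∈ Ioc a b, N * exp (μ * (t - a)) * E ≤ r)
    (hrate : ∀ t ∈ Ioc a b, κ t * E < α t + μ) :
    ∀ t ∈ Icc a b, |y t| < N * exp (μ * (t - a)) := by
  have hya : |y a| < N := hN a ⟨by linarith, le_rfl⟩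
  have hN₀ : 0 < N := (abs_nonneg _).trans_lt hya
  have hderiv (t : ℝ) :
      HasDerivAt (fun t ↦ N * exp (μ * (t - a))) (μ * (N * exp (μ * (t - a)))) t := by
    convert! ((((hasDerivAt_id t).sub_const a).const_mul μ).exp.const_mul N) using 1
    simp only [id]; ring
  refine abs_lt_of_forall_deriv_lt_of_abs_eq hyc (by fun_prop)
    (fun t ht ↦ (H t ht).1.hasDerivWithinAt) (fun t _ ↦ (hderiv t).hasDerivWithinAt)
    (by simpa using hya) fun t ht hpast ↦ ?_
  set w := N * exp (μ * (t - a)) with hw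
  have hw₀ : 0 < w := by positivity
  have hshift (s : ℝ) (hs : s ∈ Icc (-h) 0) : N * exp (μ * (t + s - a)) ≤ w * E := by
    calc N * exp (μ * (t + s - a)) = w * exp (μ * s) := by
          rw [hw, mul_assoc, ← exp_add]; ring_nf
      _ ≤ w * E := by gcongr; exact hE s hs
  have hwindow : ∀ s ∈ Icc (t - h) t, |y s| ≤ w * E := fun s hs ↦ by
    rcases le_total s a with hsa | has
    · refine (hN s ⟨by linarith [hs.1, ht.1], hsa⟩).le.trans ?_
      simpa using hshift (a - t) ⟨by linarith [hs.1], by linarith [ht.1]⟩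
    · refine (hpast s ⟨has, hs.2⟩).trans ?_
      simpa using hshift (s - t) ⟨by linarith [hs.1], by linarith [hs.2]⟩
  have hbound := abs_le.1 ((H t ht).2 (w * E) (hr t ht) hwindow)
  have hlt : κ t * (w * E) < α t * w + μ * w := by
    linarith [mul_lt_mul_of_pos_left (hrate t ht) hw₀]
  constructor <;> intro hyt <;> rw [hyt] at hbound <;> linarith [hbound.1, hbound.2]

lemma abs_sub_le_integral {a b S : ℝ} (H : HalanayOn y y' 0 κ h r (Ioo a b)) (hab : a ≤ b)
    (hyc : ContinuousOn y (Icc a b)) (hκ : IntervalIntegrable κ MeasureTheory.volume a b)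
    (hSr : S ≤ r) (hS : ∀ s ∈ Icc (a - h) b, |y s| ≤ S) :
    |y b - y a| ≤ (∫ t in a..b, κ t) * S := by
  rw [← intervalIntegral.integral_mul_const]
  refine norm_sub_le_integral_of_norm_deriv_le_of_le hab hyc
    (fun t ht ↦ (H t ht).1.differentiableAt.differentiableWithinAt)
    (.of_forall fun t ht ↦ ?_) (hκ.mul_const S)
  rw [(H t ht).1.deriv]
  simpa using (H t ht).2 S hSr fun s hs ↦ hS s ⟨by linarith [hs.1, ht.1], hs.2.trans ht.2.le⟩

/-- A growth bound carries the solution through `[t₀, T]`, after which the decay takes over. -/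
lemma abs_lt_of_growth_of_decay {κ₁ : ℝ → ℝ} {t₀ T h₁ N μ lam : ℝ}
    (growth : HalanayOn y y' 0 κ₁ h₁ r (Ioi t₀)) (decay : HalanayOn y y' α κ h r (Ioi T))
    (hyc : ContinuousOn y (Ici t₀)) (hh₁ : 0 ≤ h₁) (hh : 0 ≤ h) (hT : t₀ ≤ T)
    (hhist : t₀ - h₁ ≤ T - h) (hμ₀ : 0 ≤ μ) (hμ : ∀ t > t₀, κ₁ t < μ) (hlam₀ : 0 ≤ lam)
    (hlam : ∀ t > T, κ t * exp (lam * h) + lam < α t)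
    (hN : ∀ s ∈ Icc (t₀ - h₁) t₀, |y s| < N)
    (hr : N * exp (μ * (T - t₀)) * exp (lam * h) ≤ r) :
    ∀ t ≥ t₀, |y t| < N * exp (μ * (T - t₀)) * exp (-lam * (t - T)) := by
  have hN₀ : 0 < N := (abs_nonneg _).trans_lt (hN t₀ ⟨by linarith, le_rfl⟩)
  set D := N * exp (μ * (T - t₀)) with hD
  have hDN : N ≤ D := le_mul_of_one_le_right hN₀.le (one_le_exp (mul_nonneg hμ₀ (by linarith)))
  have hD₀ : 0 < D := hN₀.trans_le hDN
  have hexpD (t : ℝ) (ht : t ≤ T) : N * exp (μ * (t - t₀)) ≤ D := by rw [hD]; gcongr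
  have hDr : D ≤ r :=
    (le_mul_of_one_le_right hD₀.le (one_le_exp (mul_nonneg hlam₀ hh))).trans hr
  have grown : ∀ t ∈ Icc t₀ T, |y t| < N * exp (μ * (t - t₀)) :=
    (growth.mono Ioc_subset_Ioi_self).abs_lt_exp (E := 1) hh₁ (hyc.mono Icc_subset_Ici_self) hN
      (fun s hs ↦ exp_le_one_iff.2 (mul_nonpos_of_nonneg_of_nonpos hμ₀ hs.2))
      (fun t ht ↦ by simpa using (hexpD t ht.2).trans hDr)
      (fun t ht ↦ by simpa using hμ t ht.1)
  have before_T : ∀ s ∈ Icc (t₀ - h₁) T, |y s| < D := fun s hs ↦ by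
    rcases le_total s t₀ with hst₀ | hst₀
    · exact (hN s ⟨hs.1, hst₀⟩).trans_le hDN
    · exact (grown s ⟨hst₀, hs.2⟩).trans_le (hexpD s hs.2)
  intro t ht
  rcases le_total t T with htT | hTt
  · refine (before_T t ⟨by linarith, htT⟩).trans_le (le_mul_of_one_le_right hD₀.le ?_)
    exact one_le_exp (mul_nonneg_of_nonpos_of_nonpos (neg_nonpos.2 hlam₀) (sub_nonpos.2 htT))
  · refine (decay.mono Ioc_subset_Ioi_self).abs_lt_exp hh
      (hyc.mono fun s hs ↦ hT.trans hs.1) (fun s hs ↦ before_T s ⟨hhist.trans hs.1, hs.2⟩)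
      (E := exp (lam * h)) (fun s hs ↦ ?_) (fun s hs ↦ hr.trans' ?_)
      (fun s hs ↦ by linarith [hlam s hs.1]) t ⟨hTt, le_rfl⟩
    · exact exp_le_exp.2 (by nlinarith [hs.1])
    · have : exp (-lam * (s - T)) ≤ 1 := exp_le_one_iff.2 (by nlinarith [hs.1])
      gcongr
      exact mul_le_of_le_one_right hD₀.le this

end HalanayOn

theorem exists_exp_bound_of_halanayOn {α κ κ₁ : ℝ → ℝ} {t₀ T h₁ h₂ r μ lam : ℝ} (hr : 0 < r)
    (hh₁ : 0 ≤ h₁) (hh₂ : 0 ≤ h₂) (hT : t₀ ≤ T) (hhist : t₀ - h₁ ≤ T - h₂) (hμ₀ : 0 ≤ μ)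
    (hμ : ∀ t > t₀, κ₁ t < μ) (hlam₀ : 0 ≤ lam)
    (hlam : ∀ t > T, κ t * exp (lam * h₂) + lam < α t) :
    ∃ ε > 0, ∃ M ≥ (1 : ℝ), ∀ y y' : ℝ → ℝ, ContinuousOn y (Ici (t₀ - h₁)) →
      HalanayOn y y' 0 κ₁ h₁ r (Ioi t₀) → HalanayOn y y' α κ h₂ r (Ioi T) →
      sSup ((fun s ↦ |y s|) '' Icc (t₀ - h₁) t₀) ≤ ε → ∀ t ∈ Ici t₀,
        |y t| ≤ M * exp (-lam * (t - t₀)) * sSup ((fun s ↦ |y s|) '' Icc (t₀ - h₁) t₀) := by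
  set D := exp (μ * (T - t₀))
  set E := exp (lam * h₂)
  refine ⟨r / (D * E) / 2, by positivity, D * exp (lam * (T - t₀)), ?_, ?_⟩
  · exact one_le_mul_of_one_le_of_one_le (one_le_exp (mul_nonneg hμ₀ (sub_nonneg.2 hT)))
      (one_le_exp (mul_nonneg hlam₀ (sub_nonneg.2 hT)))
  intro y y' hyc growth decay hε t ht
  set N := sSup ((fun s ↦ |y s|) '' Icc (t₀ - h₁) t₀)
  have hle_N : ∀ s ∈ Icc (t₀ - h₁) t₀, |y s| ≤ N := fun s hs ↦
    le_csSup (isCompact_Icc.image_of_continuousOn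
      (hyc.mono Icc_subset_Ici_self).abs).bddAbove (mem_image_of_mem _ hs)
  have hr₀ : 0 < r / (D * E) := by positivity
  -- The comparison needs a strict bound on the history, so `N` is approached from above.
  have hbound : |y t| ≤ N * D * exp (-lam * (t - T)) := by
    refine ge_of_tendsto (((continuous_id.mul_const D).mul_const _).continuousWithinAt
      (s := Ioi N) (x := N)).tendsto ?_
    filter_upwards [Ioc_mem_nhdsGT (show N < r / (D * E) by linarith)] with N' hN'
    refine (growth.abs_lt_of_growth_of_decay decay (hyc.mono (Ici_subset_Ici.2 (by linarith)))
      hh₁ hh₂ hT hhist hμ₀ hμ hlam₀ hlam (fun s hs ↦ (hle_N s hs).trans_lt hN'.1) ?_ t ht).le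
    rw [mul_assoc]
    exact (le_div_iff₀ (by positivity)).1 hN'.2
  calc |y t| ≤ N * D * exp (-lam * (t - T)) := hbound
    _ = D * exp (lam * (T - t₀)) * exp (-lam * (t - t₀)) * N := by
      rw [mul_assoc D, ← exp_add]; ring_nf

end Halanay

section Linearization

open Set Filter Topology

variable {ι : Type*} [Fintype ι]

/-- `F`, a function of two families of delayed values, agrees near the constant state `K` with the
affine function `∑ j, (b j * u j - c j * (v j - K))` up to the relative error `η`, as long as all
the values are within `r` of `K`. -/
def LinearizesWithin (F : (ι → ℝ) → (ι → ℝ) → ℝ) (b c : ι → ℝ) (K η r : ℝ) : Prop :=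
  ∀ u v S, 0 ≤ S → S ≤ r → (∀ j, |u j - K| ≤ S) → (∀ j, |v j - K| ≤ S) →
    |F u v - ∑ j, (b j * u j - c j * (v j - K))| ≤ η * S

lemma abs_sum_mul_le {b u : ι → ℝ} {ρ : ι → ℝ} (hb : ∀ j, 0 ≤ b j) (hu : ∀ j, |u j| ≤ ρ j) :
    |∑ j, b j * u j| ≤ ∑ j, b j * ρ j := by
  refine (Finset.abs_sum_le_sum_abs _ _).trans (Finset.sum_le_sum fun j _ ↦ ?_)
  rw [abs_mul, abs_of_nonneg (hb j)]
  exact mul_le_mul_of_nonneg_left (hu j) (hb j)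

namespace LinearizesWithin

variable {F : (ι → ℝ) → (ι → ℝ) → ℝ} {b c u v : ι → ℝ} {K η r S z : ℝ}

lemma abs_sub_mul_le (H : LinearizesWithin F b c K η r) (hb : ∀ j, 0 ≤ b j) (hc : ∀ j, 0 ≤ c j)
    (hSr : S ≤ r) (hu : ∀ j, |u j - K| ≤ S) (hv : ∀ j, |v j - K| ≤ S) (hz : |z - K| ≤ S) :
    |F u v - (∑ j, b j) * z| ≤ (2 * ∑ j, b j + ∑ j, c j + η) * S := by
  have hF := H u v S ((abs_nonneg _).trans hz) hSr hu hv
  have hbu := abs_sum_mul_le hb hu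
  have hcv := abs_sum_mul_le hc hv
  have hbz := abs_sum_mul_le hb fun _ ↦ hz
  simp only [mul_sub, Finset.sum_sub_distrib, ← Finset.sum_mul] at hF hbu hcv hbz
  rw [abs_le] at hF hbu hcv hbz ⊢
  constructor <;> linarith

/-- Comparing `v j` with `z` instead of `K` turns the linear part into an undelayed damping, at the
price of the increments `z - v j`. -/
lemma abs_sub_mul_add_mul_le (H : LinearizesWithin F b c K η r) (hb : ∀ j, 0 ≤ b j)
    (hc : ∀ j, 0 ≤ c j) {ρ : ι → ℝ} (hSr : S ≤ r) (hu : ∀ j, |u j - K| ≤ S)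
    (hv : ∀ j, |v j - K| ≤ S) (hz : |z - K| ≤ S) (hρ : ∀ j, |z - v j| ≤ ρ j) :
    |F u v - (∑ j, b j) * z + (∑ j, b j + ∑ j, c j) * (z - K)|
      ≤ (∑ j, b j + η) * S + ∑ j, c j * ρ j := by
  have hF := H u v S ((abs_nonneg _).trans hz) hSr hu hv
  have hbu := abs_sum_mul_le hb hu
  have hincr := abs_sum_mul_le hc hρ
  simp only [mul_sub, Finset.sum_sub_distrib, ← Finset.sum_mul] at hF hbu hincr
  rw [abs_le] at hF hbu hincr ⊢
  constructor <;> linarith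

end LinearizesWithin

/-- The right-hand side `β(t) (F((x(t - τ_j(t)))_j, (x(t - σ_j(t)))_j) - δ x(t))` of a scalar
equation with birth function `F`, delays `τ`, `σ` and mortality rate `δ`. -/
def delayField (F : (ι → ℝ) → (ι → ℝ) → ℝ) (δ : ℝ) (β : ℝ → ℝ) (τ σ : ι → ℝ → ℝ) (x : ℝ → ℝ)
    (t : ℝ) : ℝ :=
  β t * (F (fun j ↦ x (t - τ j t)) (fun j ↦ x (t - σ j t)) - δ * x t)

section DelayEquation

variable {F : (ι → ℝ) → (ι → ℝ) → ℝ} {b c : ι → ℝ} {K η r h t₀ : ℝ} {β x : ℝ → ℝ}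
  {τ σ : ι → ℝ → ℝ}

lemma LinearizesWithin.halanayOn_growth (H : LinearizesWithin F b c K η r)
    (hb : ∀ j, 0 ≤ b j) (hc : ∀ j, 0 ≤ c j) (hh : 0 ≤ h) (hβ : ∀ t ∈ Ici t₀, 0 ≤ β t)
    (hτ : ∀ j, ∀ t ∈ Ici t₀, τ j t ∈ Icc 0 h) (hσ : ∀ j, ∀ t ∈ Ici t₀, σ j t ∈ Icc 0 h)
    (hx : ∀ t ∈ Ioi t₀, HasDerivAt x (delayField F (∑ j, b j) β τ σ x t) t) :
    HalanayOn (fun t ↦ x t - K) (delayField F (∑ j, b j) β τ σ x) 0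
      (fun t ↦ β t * (2 * ∑ j, b j + ∑ j, c j + η)) h r (Ioi t₀) := by
  refine fun t ht ↦ ⟨(hx t ht).sub_const K, fun S hSr hS ↦ ?_⟩
  have ht' : t ∈ Ici t₀ := Ioi_subset_Ici_self ht
  have hwindow : ∀ d ∈ Icc 0 h, |x (t - d) - K| ≤ S := fun d hd ↦
    hS _ ⟨by linarith [hd.2], by linarith [hd.1]⟩
  have hbound := H.abs_sub_mul_le hb hc hSr (fun j ↦ hwindow _ (hτ j t ht'))
    (fun j ↦ hwindow _ (hσ j t ht')) (hS t ⟨by linarith, le_rfl⟩)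
  rw [Pi.zero_apply, zero_mul, add_zero, delayField, abs_mul, abs_of_nonneg (hβ t ht'), mul_assoc]
  exact mul_le_mul_of_nonneg_left hbound (hβ t ht')

lemma LinearizesWithin.abs_sub_le_integral_mul {s t S : ℝ} (H : LinearizesWithin F b c K η r)
    (hb : ∀ j, 0 ≤ b j) (hc : ∀ j, 0 ≤ c j) (hh : 0 ≤ h) (hβ : ∀ t ∈ Ici t₀, 0 ≤ β t)
    (hβi : MeasureTheory.LocallyIntegrableOn β (Ici t₀))
    (hτ : ∀ j, ∀ t ∈ Ici t₀, τ j t ∈ Icc 0 h) (hσ : ∀ j, ∀ t ∈ Ici t₀, σ j t ∈ Icc 0 h)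
    (hxc : ContinuousOn x (Ici t₀))
    (hx : ∀ t ∈ Ioi t₀, HasDerivAt x (delayField F (∑ j, b j) β τ σ x t) t)
    (hs : t₀ ≤ s) (hst : s ≤ t) (hSr : S ≤ r) (hS : ∀ z ∈ Icc (s - h) t, |x z - K| ≤ S) :
    |x t - x s| ≤ (∫ z in s..t, β z) * (2 * ∑ j, b j + ∑ j, c j + η) * S := by
  have hsub : Icc s t ⊆ Ici t₀ := fun z hz ↦ hs.trans hz.1
  have hint : IntervalIntegrable β MeasureTheory.volume s t :=
    (intervalIntegrable_iff_integrableOn_Icc_of_le hst).2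
      (hβi.integrableOn_compact_subset hsub isCompact_Icc)
  have hbound := ((H.halanayOn_growth hb hc hh hβ hτ hσ hx).mono
    fun z (hz : z ∈ Ioo s t) ↦ hs.trans_lt hz.1).abs_sub_le_integral
    hst ((hxc.mono hsub).sub continuousOn_const) (hint.mul_const _) hSr hS
  simpa only [sub_sub_sub_cancel_right, intervalIntegral.integral_mul_const] using hbound

/-- The damping form needs the growth bound on `[t - h, t]`, which itself looks back by `h`: hence
the window of length `2 * h`. -/
lemma LinearizesWithin.halanayOn_decay {q T : ℝ} (H : LinearizesWithin F b c K η r)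
    (hb : ∀ j, 0 ≤ b j) (hc : ∀ j, 0 ≤ c j) (hη : 0 ≤ η) (hh : 0 ≤ h) (hT : t₀ + h ≤ T)
    (hβ : ∀ t ∈ Ici t₀, 0 ≤ β t) (hβi : MeasureTheory.LocallyIntegrableOn β (Ici t₀))
    (hτ : ∀ j, ∀ t ∈ Ici t₀, τ j t ∈ Icc 0 h) (hσ : ∀ j, ∀ t ∈ Ici t₀, σ j t ∈ Icc 0 h)
    (hq : ∀ t ∈ Ioi T, ∑ j, c j * ∫ s in (t - σ j t)..t, β s ≤ q)
    (hxc : ContinuousOn x (Ici t₀))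
    (hx : ∀ t ∈ Ioi t₀, HasDerivAt x (delayField F (∑ j, b j) β τ σ x t) t) :
    HalanayOn (fun t ↦ x t - K) (delayField F (∑ j, b j) β τ σ x)
      (fun t ↦ β t * (∑ j, b j + ∑ j, c j))
      (fun t ↦ β t * (∑ j, b j + η + q * (2 * ∑ j, b j + ∑ j, c j + η))) (2 * h) r (Ioi T) := by
  intro t (ht : T < t)
  have ht₀ : t₀ < t := by linarith
  refine ⟨(hx t ht₀).sub_const K, fun S hSr hS ↦ ?_⟩
  set Λ := 2 * ∑ j, b j + ∑ j, c j + η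
  have hΛ₀ : 0 ≤ Λ := by
    have := Finset.sum_nonneg fun j (_ : j ∈ Finset.univ) ↦ hb j
    have := Finset.sum_nonneg fun j (_ : j ∈ Finset.univ) ↦ hc j
    positivity
  have hz : |x t - K| ≤ S := hS t ⟨by linarith, le_rfl⟩
  have hS₀ : 0 ≤ S := (abs_nonneg _).trans hz
  have hwindow : ∀ d ∈ Icc 0 h, |x (t - d) - K| ≤ S := fun d hd ↦
    hS _ ⟨by linarith [hd.2], by linarith [hd.1]⟩
  have hincr (j : ι) : |x t - x (t - σ j t)| ≤ (∫ s in (t - σ j t)..t, β s) * Λ * S := by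
    obtain ⟨hσ₀, hσh⟩ := hσ j t ht₀.le
    exact H.abs_sub_le_integral_mul hb hc hh hβ hβi hτ hσ hxc hx (by linarith) (by linarith) hSr
      fun s hs ↦ hS s ⟨by linarith [hs.1], hs.2⟩
  have hbound := H.abs_sub_mul_add_mul_le hb hc hSr (fun j ↦ hwindow _ (hτ j t ht₀.le))
    (fun j ↦ hwindow _ (hσ j t ht₀.le)) hz hincr
  have hsum : ∑ j, c j * ((∫ s in (t - σ j t)..t, β s) * Λ * S) ≤ q * Λ * S := by
    simp only [← mul_assoc, ← Finset.sum_mul]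
    gcongr
    exact hq t ht
  have hβt := hβ t ht₀.le
  calc |delayField F (∑ j, b j) β τ σ x t + β t * (∑ j, b j + ∑ j, c j) * (x t - K)|
      = β t * |F (fun j ↦ x (t - τ j t)) (fun j ↦ x (t - σ j t)) - (∑ j, b j) * x t
          + (∑ j, b j + ∑ j, c j) * (x t - K)| := by
        rw [delayField, mul_assoc, ← mul_add, abs_mul, abs_of_nonneg hβt]
    _ ≤ β t * ((∑ j, b j + η) * S + q * Λ * S) := by gcongr; linarith
    _ = β t * (∑ j, b j + η + q * Λ) * S := by ring

lemma exists_pos_lt_of_continuousAt {f : ℝ → ℝ} {y : ℝ} (hf : ContinuousAt f 0) (hy : f 0 < y) :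
    ∃ s > 0, f s < y :=
  (eventually_mem_nhdsWithin.and
    (nhdsWithin_le_nhds (hf.eventually_lt continuousAt_const hy))).exists (f := 𝓝[>] 0)

theorem exists_exp_bound_of_linearizesWithin {q β₀ B : ℝ}
    (hF : ∀ η > 0, ∃ r > 0, LinearizesWithin F b c K η r) (hb : ∀ j, 0 ≤ b j) (hc : ∀ j, 0 ≤ c j)
    (hh : 0 ≤ h) (hβi : MeasureTheory.LocallyIntegrableOn β (Ici t₀)) (hβ₀ : 0 < β₀)
    (hβ : ∀ t ∈ Ici t₀, β t ∈ Icc β₀ B)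
    (hτ : ∀ j, ∀ t ∈ Ici t₀, τ j t ∈ Icc 0 h) (hσ : ∀ j, ∀ t ∈ Ici t₀, σ j t ∈ Icc 0 h)
    (hq : q * (2 * ∑ j, b j + ∑ j, c j) < ∑ j, c j)
    (hqσ : ∀ᶠ t in atTop, ∑ j, c j * ∫ s in (t - σ j t)..t, β s ≤ q) :
    ∃ ε > 0, ∃ M ≥ (1 : ℝ), ∃ lam > 0, ∀ x : ℝ → ℝ, ContinuousOn x (Ici (t₀ - h)) →
      (∀ t ∈ Ioi t₀, HasDerivAt x (delayField F (∑ j, b j) β τ σ x t) t) →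
      sSup ((fun s ↦ |x s - K|) '' Icc (t₀ - h) t₀) ≤ ε → ∀ t ∈ Ici t₀,
        |x t - K| ≤ M * Real.exp (-lam * (t - t₀)) *
          sSup ((fun s ↦ |x s - K|) '' Icc (t₀ - h) t₀) := by
  have hβ_nonneg : ∀ t ∈ Ici t₀, 0 ≤ β t := fun t ht ↦ hβ₀.le.trans (hβ t ht).1
  have hB₀ : 0 ≤ B := (hβ_nonneg t₀ self_mem_Ici).trans (hβ t₀ self_mem_Ici).2
  have hb₀ : 0 ≤ ∑ j, b j := Finset.sum_nonneg fun j _ ↦ hb j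
  have hc₀ : 0 ≤ ∑ j, c j := Finset.sum_nonneg fun j _ ↦ hc j
  obtain ⟨lam, hlam₀, hlam⟩ : ∃ lam > 0,
      (∑ j, b j + lam + q * (2 * ∑ j, b j + ∑ j, c j + lam)) * Real.exp (lam * (2 * h))
        + lam / β₀ < ∑ j, b j + ∑ j, c j :=
    exists_pos_lt_of_continuousAt (by fun_prop) (by simpa using hq)
  obtain ⟨r, hr₀, hr⟩ := hF lam hlam₀
  obtain ⟨T, hqT, hT⟩ : ∃ T, (∀ t ∈ Ioi T, ∑ j, c j * ∫ s in (t - σ j t)..t, β s ≤ q) ∧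
      t₀ + h ≤ T :=
    ((eventually_forall_ge_atTop.2 hqσ).and (eventually_ge_atTop (t₀ + h))).exists.imp
      fun T hT ↦ ⟨fun t ht ↦ hT.1 t (mem_Ioi.1 ht).le, hT.2⟩
  set Λ := 2 * ∑ j, b j + ∑ j, c j + lam
  have hΛ₀ : 0 ≤ Λ := by positivity
  have hgrowth_rate : ∀ t > t₀, β t * Λ < B * Λ + 1 := fun t ht ↦ by
    linarith [mul_le_mul_of_nonneg_right (hβ t (le_of_lt ht)).2 hΛ₀]
  have hdecay_rate : ∀ t > T, β t * (∑ j, b j + lam + q * Λ) * Real.exp (lam * (2 * h)) + lam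
      < β t * (∑ j, b j + ∑ j, c j) := fun t ht ↦ by
    obtain ⟨hβt, -⟩ := hβ t (mem_Ici.2 (by linarith))
    have hlamβ : lam ≤ β t * (lam / β₀) := by
      rw [mul_div_left_comm]
      exact le_mul_of_one_le_right hlam₀.le ((one_le_div hβ₀).2 hβt)
    linarith [mul_lt_mul_of_pos_left hlam (hβ₀.trans_le hβt)]
  obtain ⟨ε, hε, M, hM, hstable⟩ := exists_exp_bound_of_halanayOn hr₀ hh (by positivity)
    (by linarith) (by linarith) (by positivity) hgrowth_rate hlam₀.le hdecay_rate
  refine ⟨ε, hε, M, hM, lam, hlam₀, fun x hxc hx ↦ ?_⟩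
  exact hstable _ _ (hxc.sub continuousOn_const)
    (hr.halanayOn_growth hb hc hh hβ_nonneg hτ hσ hx)
    (hr.halanayOn_decay hb hc hlam₀.le hh (by linarith) hβ_nonneg hβi hτ hσ hqT
      (hxc.mono (Ici_subset_Ici.2 (by linarith))) hx)

end DelayEquation

end Linearization

section Nicholson

open Set Filter Topology

variable {ι : Type*} [Fintype ι]

/-- The birth function `∑ j, p j * u j * exp (-a j * v j)` of the Nicholson equation, as a function
of the values `u` delayed by `τ` and the values `v` delayed by `σ`. -/
noncomputable def nicholsonBirth (p a u v : ι → ℝ) : ℝ :=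
  ∑ j, p j * u j * Real.exp (-(a j) * v j)

lemma abs_mul_exp_sub_linearization_le {u v K a S : ℝ} (ha : 0 ≤ a) (hK : 0 ≤ K)
    (haS : a * S ≤ 1) (hu : |u - K| ≤ S) (hv : |v - K| ≤ S) :
    |u * Real.exp (-a * (v - K)) - (u - K * (a * (v - K)))| ≤ (K * a ^ 2 + 2 * a) * S ^ 2 := by
  set θ := -a * (v - K) with hθ
  have hθS : |θ| ≤ a * S := by
    rw [hθ, abs_mul, abs_neg, abs_of_nonneg ha]
    gcongr
  have hfirst : |Real.exp θ - 1| ≤ 2 * (a * S) :=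
    (Real.abs_exp_sub_one_le (hθS.trans haS)).trans (by gcongr)
  have hsecond : |Real.exp θ - 1 - θ| ≤ (a * S) ^ 2 :=
    (Real.abs_exp_sub_one_sub_id_le (hθS.trans haS)).trans (sq_le_sq.2 (hθS.trans (le_abs_self _)))
  calc |u * Real.exp θ - (u - K * (a * (v - K)))|
      = |(u - K) * (Real.exp θ - 1) + K * (Real.exp θ - 1 - θ)| := by congr 1; rw [hθ]; ring
    _ ≤ |u - K| * |Real.exp θ - 1| + K * |Real.exp θ - 1 - θ| := by
      refine (abs_add_le _ _).trans_eq ?_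
      rw [abs_mul, abs_mul, abs_of_nonneg hK]
    _ ≤ S * (2 * (a * S)) + K * (a * S) ^ 2 := by
      have : 0 ≤ S := (abs_nonneg _).trans hu
      gcongr
    _ = (K * a ^ 2 + 2 * a) * S ^ 2 := by ring

lemma linearizesWithin_nicholsonBirth {p a : ι → ℝ} {K η r : ℝ} (hp : ∀ j, 0 ≤ p j)
    (ha : ∀ j, 0 ≤ a j) (hK : 0 ≤ K) (har : ∀ j, a j * r ≤ 1)
    (hη : (∑ j, p j * Real.exp (-(a j) * K) * (K * a j ^ 2 + 2 * a j)) * r ≤ η) :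
    LinearizesWithin (nicholsonBirth p a) (fun j ↦ p j * Real.exp (-(a j) * K))
      (fun j ↦ K * (a j * p j * Real.exp (-(a j) * K))) K η r := by
  intro u v S hS₀ hSr hu hv
  have hb (j : ι) : 0 ≤ p j * Real.exp (-(a j) * K) := mul_nonneg (hp j) (Real.exp_pos _).le
  have hfactor : nicholsonBirth p a u v - ∑ j, (p j * Real.exp (-(a j) * K) * u j -
        K * (a j * p j * Real.exp (-(a j) * K)) * (v j - K)) =
      ∑ j, p j * Real.exp (-(a j) * K) *
        (u j * Real.exp (-(a j) * (v j - K)) - (u j - K * (a j * (v j - K)))) := by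
    rw [nicholsonBirth, ← Finset.sum_sub_distrib]
    refine Finset.sum_congr rfl fun j _ ↦ ?_
    rw [show -(a j) * v j = -(a j) * K + -(a j) * (v j - K) by ring, Real.exp_add]
    ring
  have hQ : 0 ≤ ∑ j, p j * Real.exp (-(a j) * K) * (K * a j ^ 2 + 2 * a j) :=
    Finset.sum_nonneg fun j _ ↦ mul_nonneg (hb j) (by have := ha j; positivity)
  calc _ = |∑ j, p j * Real.exp (-(a j) * K) *
        (u j * Real.exp (-(a j) * (v j - K)) - (u j - K * (a j * (v j - K))))| := by rw [hfactor]
    _ ≤ ∑ j, p j * Real.exp (-(a j) * K) * ((K * a j ^ 2 + 2 * a j) * S ^ 2) :=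
      abs_sum_mul_le hb fun j ↦ abs_mul_exp_sub_linearization_le (ha j) hK
        ((mul_le_mul_of_nonneg_left hSr (ha j)).trans (har j)) (hu j) (hv j)
    _ = (∑ j, p j * Real.exp (-(a j) * K) * (K * a j ^ 2 + 2 * a j)) * S * S := by
      simp only [← mul_assoc, ← Finset.sum_mul, sq]
    _ ≤ η * S := by gcongr; exact (mul_le_mul_of_nonneg_left hSr hQ).trans hη

lemma exists_linearizesWithin_nicholsonBirth {p a : ι → ℝ} {K η : ℝ} (hp : ∀ j, 0 ≤ p j)
    (ha : ∀ j, 0 ≤ a j) (hK : 0 ≤ K) (hη : 0 < η) :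
    ∃ r > 0, LinearizesWithin (nicholsonBirth p a) (fun j ↦ p j * Real.exp (-(a j) * K))
      (fun j ↦ K * (a j * p j * Real.exp (-(a j) * K))) K η r := by
  have eventually_mul_lt (Q y : ℝ) (hy : 0 < y) : ∀ᶠ r in 𝓝[>] (0 : ℝ), Q * r < y :=
    nhdsWithin_le_nhds ((continuous_const_mul Q).continuousAt.eventually_lt continuousAt_const
      (by simpa using hy))
  obtain ⟨r, ⟨hr₀, har⟩, hηr⟩ := ((eventually_mem_nhdsWithin.and
    (eventually_all.2 fun j ↦ eventually_mul_lt (a j) 1 one_pos)).and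
    (eventually_mul_lt (∑ j, p j * Real.exp (-(a j) * K) * (K * a j ^ 2 + 2 * a j)) η hη)).exists
  exact ⟨r, hr₀, linearizesWithin_nicholsonBirth hp ha hK (fun j ↦ (har j).le) hηr.le⟩

lemma isBoundedUnder_sum_mul_integral {c : ι → ℝ} {σ : ι → ℝ → ℝ} {β : ℝ → ℝ} {t₀ h B : ℝ}
    (hc : ∀ j, 0 ≤ c j) (hβ : ∀ t ∈ Ici t₀, |β t| ≤ B)
    (hσ : ∀ j, ∀ t ∈ Ici t₀, σ j t ∈ Icc 0 h) :
    IsBoundedUnder (· ≤ ·) atTop (fun t ↦ ∑ j, c j * ∫ s in (t - σ j t)..t, β s) := by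
  refine isBoundedUnder_of_eventually_le (a := ∑ j, c j * (B * h)) ?_
  filter_upwards [eventually_ge_atTop (t₀ + h), eventually_ge_atTop t₀] with t hth ht
  have hB : 0 ≤ B := (abs_nonneg _).trans (hβ t ht)
  refine (le_abs_self _).trans (abs_sum_mul_le hc fun j ↦ ?_)
  obtain ⟨hσ₀, hσh⟩ := hσ j t ht
  have hβs : ∀ s ∈ uIoc (t - σ j t) t, ‖β s‖ ≤ B := fun s hs ↦ by
    rw [uIoc_of_le (by linarith)] at hs
    exact hβ s (mem_Ici.2 (by linarith [hs.1]))
  calc |∫ s in (t - σ j t)..t, β s| ≤ B * |t - (t - σ j t)| :=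
        intervalIntegral.norm_integral_le_of_norm_le_const hβs
    _ ≤ B * h := by
      rw [sub_sub_cancel, abs_of_nonneg hσ₀]
      gcongr

theorem nicholson_local_exponential_stability_general {p a : ι → ℝ} {δ t₀ h K β₀ B : ℝ}
    {β : ℝ → ℝ} {τ σ : ι → ℝ → ℝ} (hp : ∀ j, 0 ≤ p j) (ha : ∀ j, 0 ≤ a j) (hδ : 0 < δ)
    (hh : 0 ≤ h) (hβi : MeasureTheory.LocallyIntegrableOn β (Ici t₀)) (hβ₀ : 0 < β₀)
    (hβ : ∀ t ∈ Ici t₀, β t ∈ Icc β₀ B)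
    (hτ : ∀ j, ∀ t ∈ Ici t₀, τ j t ∈ Icc 0 h) (hσ : ∀ j, ∀ t ∈ Ici t₀, σ j t ∈ Icc 0 h)
    (hK₀ : 0 < K) (hK : ∑ j, p j * Real.exp (-(a j) * K) = δ)
    (hcond : limsup
        (fun t ↦ ∑ j, a j * p j * Real.exp (-(a j) * K) * ∫ s in (t - σ j t)..t, β s) atTop
      < (∑ j, a j * p j * Real.exp (-(a j) * K)) /
          (2 * δ + K * ∑ j, a j * p j * Real.exp (-(a j) * K))) :
    ∃ ε > 0, ∃ M ≥ (1 : ℝ), ∃ lam > 0, ∀ x : ℝ → ℝ, ContinuousOn x (Ici (t₀ - h)) →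
      (∀ t ∈ Ioi t₀, HasDerivAt x (delayField (nicholsonBirth p a) δ β τ σ x t) t) →
      sSup ((fun s ↦ |x s - K|) '' Icc (t₀ - h) t₀) ≤ ε → ∀ t ∈ Ici t₀,
        |x t - K| ≤ M * Real.exp (-lam * (t - t₀)) *
          sSup ((fun s ↦ |x s - K|) '' Icc (t₀ - h) t₀) := by
  have hc (j : ι) : 0 ≤ a j * p j * Real.exp (-(a j) * K) :=
    mul_nonneg (mul_nonneg (ha j) (hp j)) (Real.exp_pos _).le
  have hc₀ : 0 ≤ ∑ j, a j * p j * Real.exp (-(a j) * K) := Finset.sum_nonneg fun j _ ↦ hc j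
  obtain ⟨q, hlimsup, hq⟩ := exists_between hcond
  have hqσ := eventually_lt_of_limsup_lt hlimsup (isBoundedUnder_sum_mul_integral hc
    (fun t ht ↦ abs_le.2 ⟨by linarith [(hβ t ht).1, (hβ t ht).2], (hβ t ht).2⟩) hσ)
  rw [lt_div_iff₀ (by positivity)] at hq
  subst hK
  refine exists_exp_bound_of_linearizesWithin (q := K * q)
    (fun η hη ↦ exists_linearizesWithin_nicholsonBirth hp ha hK₀.le hη)
    (fun j ↦ mul_nonneg (hp j) (Real.exp_pos _).le) (fun j ↦ mul_nonneg hK₀.le (hc j))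
    hh hβi hβ₀ hβ hτ hσ ?_ ?_
  · rw [← Finset.mul_sum, mul_assoc]
    exact mul_lt_mul_of_pos_left hq hK₀
  · filter_upwards [hqσ] with t ht
    simp only [mul_assoc K, ← Finset.mul_sum]
    exact mul_le_mul_of_nonneg_left ht.le hK₀.le

end Nicholson

/- STATEMENT 3 (Theorem 2.2): if p := Σ_j p_j > δ and
   limsup_{t→∞} Σ_j a_j p_j e^{−a_j K} ∫_{t−σ_j(t)}^t β(s) ds
     < (Σ_j a_j p_j e^{−a_j K}) / (2δ + K Σ_j a_j p_j e^{−a_j K}),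
   then the positive equilibrium K is locally exponentially stable. -/
theorem nicholson_local_exponential_stability
    (m : ℕ) (hm : 1 ≤ m) (p a : Fin m → ℝ)
    (hp : ∀ j, 0 < p j) (ha : ∀ j, 0 < a j) (δ : ℝ) (hδ : 0 < δ)
    (t₀ : ℝ) (β : ℝ → ℝ) (τ σ : Fin m → ℝ → ℝ)
    (hβc : ContinuousOn β (Set.Ici t₀))
    (hτc : ∀ j, ContinuousOn (τ j) (Set.Ici t₀))
    (hσc : ∀ j, ContinuousOn (σ j) (Set.Ici t₀))
    (hτ0 : ∀ j, ∀ t ∈ Set.Ici t₀, 0 ≤ τ j t)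
    (hσ0 : ∀ j, ∀ t ∈ Set.Ici t₀, 0 ≤ σ j t)
    (βminus : ℝ) (hβminus : IsGLB (β '' Set.Ici t₀) βminus) (hβmpos : 0 < βminus)
    (hβub : ∃ B, ∀ t ∈ Set.Ici t₀, β t ≤ B)
    (τbar : ℝ)
    (hτbar : IsLUB ((⋃ j, τ j '' Set.Ici t₀) ∪ ⋃ j, σ j '' Set.Ici t₀) τbar)
    -- p > δ and K is the positive equilibrium
    (hpδ : δ < ∑ j, p j)
    (K : ℝ) (hK0 : 0 < K) (hK : ∑ j, p j * Real.exp (-(a j) * K) = δ)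
    -- the stability condition (2.4)
    (hcond : Filter.limsup
        (fun t => ∑ j, a j * p j * Real.exp (-(a j) * K) * ∫ s in (t - σ j t)..t, β s)
        Filter.atTop
      < (∑ j, a j * p j * Real.exp (-(a j) * K)) /
          (2 * δ + K * ∑ j, a j * p j * Real.exp (-(a j) * K))) :
    -- K is locally exponentially stable
    ∃ ε > 0, ∃ M ≥ (1 : ℝ), ∃ lam > 0, ∀ x : ℝ → ℝ,
      NicholsonSolution m p a δ t₀ τbar β τ σ x →
      sSup ((fun s => |x s - K|) '' Set.Icc (t₀ - τbar) t₀) ≤ ε →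
      ∀ t ∈ Set.Ici t₀, |x t - K| ≤
        M * Real.exp (-lam * (t - t₀)) *
          sSup ((fun s => |x s - K|) '' Set.Icc (t₀ - τbar) t₀) := by
  obtain ⟨B, hB⟩ := hβub
  have hβ : ∀ t ∈ Set.Ici t₀, β t ∈ Set.Icc βminus B := fun t ht ↦
    ⟨hβminus.1 (Set.mem_image_of_mem β ht), hB t ht⟩
  have hτ : ∀ j, ∀ t ∈ Set.Ici t₀, τ j t ∈ Set.Icc 0 τbar := fun j t ht ↦
    ⟨hτ0 j t ht, hτbar.1 (.inl (Set.mem_iUnion_of_mem j (Set.mem_image_of_mem _ ht)))⟩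
  have hσ : ∀ j, ∀ t ∈ Set.Ici t₀, σ j t ∈ Set.Icc 0 τbar := fun j t ht ↦
    ⟨hσ0 j t ht, hτbar.1 (.inr (Set.mem_iUnion_of_mem j (Set.mem_image_of_mem _ ht)))⟩
  have hτbar₀ : 0 ≤ τbar :=
    (hτ ⟨0, hm⟩ t₀ Set.self_mem_Ici).1.trans (hτ ⟨0, hm⟩ t₀ Set.self_mem_Ici).2
  obtain ⟨ε, hε, M, hM, lam, hlam, hstable⟩ := nicholson_local_exponential_stability_general
    (fun j ↦ (hp j).le) (fun j ↦ (ha j).le) hδ hτbar₀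
    (hβc.locallyIntegrableOn measurableSet_Ici) hβmpos hβ hτ hσ hK0 hK hcond
  exact ⟨ε, hε, M, hM, lam, hlam, fun x hx ↦ hstable x hx.1 fun t ht ↦
    (hx.2.1 t (Set.mem_Ioi.1 ht).le).hasDerivAt (Ici_mem_nhds ht)⟩
end

section
/- (Corollary 2.2.) Consider the one-pair Nicholson equation x'(t) = β(t)(p x(t−τ(t)) e^{−a x(t−σ(t))} − δ x(t)) with p > δ > 0, a > 0. If ζ_M := limsup_{t→∞} ∫_{t−σ(t)}^{t} β(s) ds < 1/(δ(2 + log(p/δ))), then the positive equilibrium K = (1/a) log(p/δ) is locally exponentially stable. -/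
/-- A solution of the one-pair Nicholson equation
`x'(t) = β(t)(p x(t−τ(t)) e^{−a x(t−σ(t))} − δ x(t))`, `t ≥ t₀`,
defined on `[t₀ − τbar, ∞)`, with admissible initial data. -/
def NicholsonSolution1 (p a δ t₀ τbar : ℝ) (β τ σ : ℝ → ℝ) (x : ℝ → ℝ) : Prop :=
  ContinuousOn x (Set.Ici (t₀ - τbar)) ∧
  (∀ t ∈ Set.Ici t₀, HasDerivWithinAt x
      (β t * (p * x (t - τ t) * Real.exp (-a * x (t - σ t)) - δ * x t))
      (Set.Ici t₀) t) ∧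
  (∀ s, t₀ - τbar ≤ s → s < t₀ → 0 ≤ x s) ∧
  0 < x t₀

/-!
Around `K` the deviation `u = x - K` solves `u' = β F`, where `F` is the linear delay expression
`δ (u(t - τ) - L u(t - σ) - u(t))`, `L = log (p / δ)`, up to an error quadratic in the size of `u`.
If `|u|` has stayed below a barrier `g` and touches it at time `t`, then over `[t - σ(t), t]` the
solution moves by at most `δ (2 + L) ∫ β` times the recent size of `u`. Hence `-L u(t - σ)` may be
replaced by `-L u(t)` at the cost of `L · δ (2 + L) ∫ β < L`, and the remaining dissipation lets
`u²` grow strictly slower than `g²`, provided `g` decays slowly enough exponentially. On a bounded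
time interval before the integral condition takes effect, an exponentially growing barrier suffices.
-/

open Set Filter Topology

section Barriers

variable {f f' g g' : ℝ → ℝ} {a b : ℝ}

theorem image_le_of_deriv_right_lt_at_touch (hf : ContinuousOn f (Icc a b))
    (hf' : ∀ t ∈ Ico a b, HasDerivWithinAt f (f' t) (Ici t) t) (hg : ContinuousOn g (Icc a b))
    (hg' : ∀ t ∈ Ico a b, HasDerivWithinAt g (g' t) (Ici t) t) (ha : f a ≤ g a)
    (touch : ∀ t ∈ Ico a b, (∀ s ∈ Icc a t, f s ≤ g s) → f t = g t → f' t < g' t) :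
    ∀ t ∈ Icc a b, f t ≤ g t := by
  have hclosed : IsClosed ({t | f t ≤ g t} ∩ Icc a b) := by
    rw [inter_comm]
    exact isClosed_Icc.isClosed_le hf hg
  refine hclosed.Icc_subset_of_forall_mem_nhdsGT_of_Icc_subset ha fun t ht hbefore => ?_
  have hle : f t ≤ g t := hbefore (right_mem_Icc.2 ht.1)
  rcases hle.lt_or_eq with hlt | heq
  · have hnear : ∀ᶠ s in 𝓝[Icc a b] t, f s < g s :=
      (hf t (Ico_subset_Icc_self ht)).eventually_lt (hg t (Ico_subset_Icc_self ht)) hlt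
    filter_upwards [nhdsWithin_le_of_mem (Icc_mem_nhdsGT_of_mem ht) hnear] with s hs using hs.le
  · have hslope : ∀ᶠ s in 𝓝[>] t, slope (f - g) t s < 0 :=
      ((hf' t ht).sub (hg' t ht)).Ioi_of_Ici.limsup_slope_le' self_notMem_Ioi
        (sub_neg.2 (touch t ht hbefore heq))
    filter_upwards [hslope, self_mem_nhdsWithin] with s hs hts
    rw [slope_def_field, div_lt_iff₀ (sub_pos.2 hts), zero_mul, sub_neg, Pi.sub_apply, Pi.sub_apply,
      heq, sub_self, sub_neg] at hs
    exact hs.le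

theorem abs_le_of_mul_deriv_lt_at_touch (hf : ContinuousOn f (Icc a b))
    (hf' : ∀ t ∈ Ico a b, HasDerivWithinAt f (f' t) (Ici t) t) (hg : ContinuousOn g (Icc a b))
    (hg' : ∀ t ∈ Ico a b, HasDerivWithinAt g (g' t) (Ici t) t) (hg0 : ∀ t ∈ Icc a b, 0 ≤ g t)
    (ha : |f a| ≤ g a)
    (touch : ∀ t ∈ Ico a b, (∀ s ∈ Icc a t, |f s| ≤ g s) → |f t| = g t →
      f t * f' t < g t * g' t) :
    ∀ t ∈ Icc a b, |f t| ≤ g t := by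
  have hderiv_sq {h h' : ℝ → ℝ} {t : ℝ} (hh : HasDerivWithinAt h (h' t) (Ici t) t) :
      HasDerivWithinAt (fun s => h s ^ 2) (2 * (h t * h' t)) (Ici t) t :=
    (hh.fun_pow 2).congr_deriv (by simp; ring)
  have hsq : ∀ t ∈ Icc a b, f t ^ 2 ≤ g t ^ 2 := by
    refine image_le_of_deriv_right_lt_at_touch (hf.pow 2) (fun t ht => hderiv_sq (hf' t ht))
      (hg.pow 2) (fun t ht => hderiv_sq (hg' t ht)) (sq_le_sq.2 (ha.trans (le_abs_self _)))
      fun t ht hbefore heq => ?_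
    have hle : ∀ s ∈ Icc a t, |f s| ≤ g s := fun s hs =>
      abs_le_of_sq_le_sq (hbefore s hs) (hg0 s ⟨hs.1, hs.2.trans ht.2.le⟩)
    have habs : |f t| = g t := by
      rw [← abs_of_nonneg (hg0 t (Ico_subset_Icc_self ht))]
      exact (sq_eq_sq_iff_abs_eq_abs _ _).1 heq
    linarith [touch t ht hle habs]
  exact fun t ht => abs_le_of_sq_le_sq (hsq t ht) (hg0 t ht)

end Barriers

theorem hasDerivAt_mul_exp_mul_sub (A l t₀ t : ℝ) :
    HasDerivAt (fun s => A * Real.exp (l * (s - t₀))) (l * (A * Real.exp (l * (t - t₀)))) t :=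
  (((((hasDerivAt_id t).sub_const t₀).const_mul l).exp).const_mul A).congr_deriv (by simp; ring)

theorem antitone_mul_exp_neg_mul_sub {A l : ℝ} (hA : 0 ≤ A) (hl : 0 ≤ l) (t₀ : ℝ) :
    Antitone fun t => A * Real.exp (-l * (t - t₀)) := by
  intro s t hst
  simp only [neg_mul]
  gcongr

theorem mul_exp_neg_mul_sub_sub (A l t₀ t r : ℝ) :
    A * Real.exp (-l * (t - r - t₀)) = Real.exp (l * r) * (A * Real.exp (-l * (t - t₀))) := by
  rw [mul_left_comm, ← Real.exp_add]
  ring_nf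

/-- A scalar solution `u` on `[t₀ - r, ∞)` of `u' = β F` whose right-hand side `F` is, along `u`,
the linear delay expression `q u(t - τ) - b u(t - σ) - d u(t)` up to an error of relative size `η`
as long as the delayed values have size at most `ρ`. The delays take values in `[0, r]`. -/
structure IsPerturbedDelaySolution (q b d η ρ t₀ r : ℝ) (β τ σ u F : ℝ → ℝ) : Prop where
  mapsTo_fst : MapsTo τ (Ici t₀) (Icc 0 r)
  mapsTo_snd : MapsTo σ (Ici t₀) (Icc 0 r)
  continuousOn : ContinuousOn u (Ici (t₀ - r))
  hasDerivWithinAt : ∀ t ≥ t₀, HasDerivWithinAt u (β t * F t) (Ici t₀) t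
  abs_rhs_sub_linear_le : ∀ t ≥ t₀, ∀ m ≤ ρ, |u (t - τ t)| ≤ m → |u (t - σ t)| ≤ m →
    |F t - (q * u (t - τ t) - b * u (t - σ t) - d * u t)| ≤ η * m

/-- The dissipation left at a time when `|u|` touches a barrier of which recent values of `|u|`
are at most `E` times the current value, where `c` bounds the integral of `β` over the delay
window. Its positivity is the stability condition. -/
def stabilityMargin (q b d η c E : ℝ) : ℝ :=
  b + d - E * (q + η + b * (q + b + d + η) * c)

theorem exists_lt_mul_stabilityMargin {q b d c β₀ : ℝ} (hβ₀ : 0 < β₀)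
    (hstable : 0 < stabilityMargin q b d 0 c 1) (r : ℝ) :
    ∃ η > 0, ∃ l > 0, l < β₀ * stabilityMargin q b d η c (Real.exp (l * (2 * r))) := by
  have hcont : Continuous fun y =>
      β₀ * stabilityMargin q b d y c (Real.exp (y * (2 * r))) - y := by
    unfold stabilityMargin
    fun_prop
  have hzero : 0 < β₀ * stabilityMargin q b d 0 c (Real.exp (0 * (2 * r))) - 0 := by
    simpa using mul_pos hβ₀ hstable
  have hnear : ∀ᶠ y in 𝓝[>] (0 : ℝ),
      0 < β₀ * stabilityMargin q b d y c (Real.exp (y * (2 * r))) - y :=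
    nhdsWithin_le_nhds (hcont.continuousAt.eventually_const_lt hzero)
  obtain ⟨y, hy, hy0⟩ := (hnear.and self_mem_nhdsWithin).exists
  exact ⟨y, hy0, y, hy0, sub_pos.1 hy⟩

namespace IsPerturbedDelaySolution

variable {q b d η ρ t₀ r m c t T N : ℝ} {β τ σ u F : ℝ → ℝ}

theorem delay_nonneg (h : IsPerturbedDelaySolution q b d η ρ t₀ r β τ σ u F) : 0 ≤ r :=
  nonempty_Icc.1 ⟨_, h.mapsTo_fst self_mem_Ici⟩

theorem continuousOn_Icc (h : IsPerturbedDelaySolution q b d η ρ t₀ r β τ σ u F) (ht : t₀ ≤ t) :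
    ContinuousOn u (Icc t T) :=
  h.continuousOn.mono fun _ hs => (sub_le_self t₀ h.delay_nonneg).trans (ht.trans hs.1)

theorem abs_rhs_le (h : IsPerturbedDelaySolution q b d η ρ t₀ r β τ σ u F)
    (hq : 0 ≤ q) (hb : 0 ≤ b) (hd : 0 ≤ d) (ht : t₀ ≤ t) (hm : m ≤ ρ)
    (hu : ∀ s ∈ Icc (t - r) t, |u s| ≤ m) : |F t| ≤ (q + b + d + η) * m := by
  obtain ⟨hτ0, hτr⟩ := h.mapsTo_fst ht
  obtain ⟨hσ0, hσr⟩ := h.mapsTo_snd ht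
  have huτ : |u (t - τ t)| ≤ m := hu _ ⟨by linarith, by linarith⟩
  have huσ : |u (t - σ t)| ≤ m := hu _ ⟨by linarith, by linarith⟩
  have hut : |u t| ≤ m := hu _ ⟨by linarith, le_rfl⟩
  have hlin : |q * u (t - τ t) - b * u (t - σ t) - d * u t| ≤ q * m + b * m + d * m := by
    refine (abs_sub _ _).trans (add_le_add ((abs_sub _ _).trans (add_le_add ?_ ?_)) ?_) <;>
      rw [abs_mul, abs_of_nonneg ‹_›] <;> gcongr
  have herr := h.abs_rhs_sub_linear_le t ht m hm huτ huσ
  linarith [abs_sub_abs_le_abs_sub (F t) (q * u (t - τ t) - b * u (t - σ t) - d * u t)]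

theorem abs_sub_delayed_le (h : IsPerturbedDelaySolution q b d η ρ t₀ r β τ σ u F)
    (hq : 0 ≤ q) (hb : 0 ≤ b) (hd : 0 ≤ d) (hη : 0 ≤ η)
    (hβ : ContinuousOn β (Ici t₀)) (hβ0 : ∀ s ≥ t₀, 0 ≤ β s)
    (ht : t₀ + r ≤ t) (hc : ∫ s in (t - σ t)..t, β s ≤ c) (hm : m ≤ ρ)
    (hu : ∀ s ∈ Icc (t - 2 * r) t, |u s| ≤ m) :
    |u t - u (t - σ t)| ≤ (q + b + d + η) * m * c := by
  have hr := h.delay_nonneg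
  have ht₀ : t₀ ≤ t := by linarith
  have hm0 : 0 ≤ m := (abs_nonneg (u t)).trans (hu t ⟨by linarith, le_rfl⟩)
  obtain ⟨hσ0, hσr⟩ := h.mapsTo_snd ht₀
  have hwin : t₀ ≤ t - σ t := by linarith
  have hle : t - σ t ≤ t := by linarith
  have hderiv : ∀ s ∈ Ioo (t - σ t) t, HasDerivAt u (β s * F s) s := fun s hs =>
    (h.hasDerivWithinAt s (hwin.trans hs.1.le)).hasDerivAt (Ici_mem_nhds (hwin.trans_lt hs.1))
  have hspeed : ∀ s ∈ Ioo (t - σ t) t, ‖deriv u s‖ ≤ (q + b + d + η) * m * β s := by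
    intro s hs
    have hs₀ : t₀ ≤ s := hwin.trans hs.1.le
    rw [(hderiv s hs).deriv, Real.norm_eq_abs, abs_mul, abs_of_nonneg (hβ0 s hs₀), mul_comm]
    refine mul_le_mul_of_nonneg_right ?_ (hβ0 s hs₀)
    exact h.abs_rhs_le hq hb hd hs₀ hm fun y hy =>
      hu y ⟨by linarith [hs.1, hy.1], hy.2.trans hs.2.le⟩
  calc |u t - u (t - σ t)|
      ≤ ∫ s in (t - σ t)..t, (q + b + d + η) * m * β s :=
        norm_sub_le_integral_of_norm_deriv_le_of_le hle (h.continuousOn_Icc hwin)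
          (fun s hs => (hderiv s hs).differentiableAt.differentiableWithinAt)
          (Eventually.of_forall hspeed)
          ((hβ.mono fun s hs => hwin.trans hs.1).const_mul _ |>.intervalIntegrable_of_Icc hle)
    _ = (q + b + d + η) * m * ∫ s in (t - σ t)..t, β s := intervalIntegral.integral_const_mul _ _
    _ ≤ (q + b + d + η) * m * c := by gcongr

theorem mul_rhs_le (h : IsPerturbedDelaySolution q b d η ρ t₀ r β τ σ u F)
    (hq : 0 ≤ q) (hb : 0 ≤ b) (hd : 0 ≤ d) (hη : 0 ≤ η)
    (hβ : ContinuousOn β (Ici t₀)) (hβ0 : ∀ s ≥ t₀, 0 ≤ β s)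
    (ht : t₀ + r ≤ t) (hc : ∫ s in (t - σ t)..t, β s ≤ c) (hm : m ≤ ρ)
    (hu : ∀ s ∈ Icc (t - 2 * r) t, |u s| ≤ m) :
    u t * F t ≤ |u t| * ((q + η + b * (q + b + d + η) * c) * m - (b + d) * |u t|) := by
  have hr := h.delay_nonneg
  have ht₀ : t₀ ≤ t := by linarith
  obtain ⟨hτ0, hτr⟩ := h.mapsTo_fst ht₀
  obtain ⟨hσ0, hσr⟩ := h.mapsTo_snd ht₀
  have huτ : |u (t - τ t)| ≤ m := hu _ ⟨by linarith, by linarith⟩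
  have huσ : |u (t - σ t)| ≤ m := hu _ ⟨by linarith, by linarith⟩
  have herr := h.abs_rhs_sub_linear_le t ht₀ m hm huτ huσ
  have hdelay := h.abs_sub_delayed_le hq hb hd hη hβ hβ0 ht hc hm hu
  set e := F t - (q * u (t - τ t) - b * u (t - σ t) - d * u t) with he
  have hrest : |e + q * u (t - τ t) + b * (u t - u (t - σ t))|
      ≤ η * m + q * m + b * ((q + b + d + η) * m * c) := by
    have hqτ : |q * u (t - τ t)| ≤ q * m := by rw [abs_mul, abs_of_nonneg hq]; gcongr
    have hbσ : |b * (u t - u (t - σ t))| ≤ b * ((q + b + d + η) * m * c) := by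
      rw [abs_mul, abs_of_nonneg hb]; gcongr
    linarith [abs_add_three e (q * u (t - τ t)) (b * (u t - u (t - σ t)))]
  calc u t * F t
      = u t * (e + q * u (t - τ t) + b * (u t - u (t - σ t))) - (b + d) * |u t| ^ 2 := by
        rw [he, sq_abs]; ring
    _ ≤ |u t| * (η * m + q * m + b * ((q + b + d + η) * m * c)) - (b + d) * |u t| ^ 2 := by
        refine sub_le_sub_right ((le_abs_self _).trans ?_) _
        rw [abs_mul]
        gcongr
    _ = |u t| * ((q + η + b * (q + b + d + η) * c) * m - (b + d) * |u t|) := by ring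

theorem abs_le_growing_exp (h : IsPerturbedDelaySolution q b d η ρ t₀ r β τ σ u F)
    (hq : 0 ≤ q) (hb : 0 ≤ b) (hd : 0 ≤ d) {B R : ℝ}
    (hβB : ∀ t ∈ Icc t₀ T, |β t| ≤ B) (hR0 : 0 ≤ R) (hR : B * (q + b + d + η) < R) (hN : 0 < N)
    (hNρ : N * Real.exp (R * (T - t₀)) ≤ ρ) (hinit : ∀ s ∈ Icc (t₀ - r) t₀, |u s| ≤ N) :
    ∀ t ∈ Icc t₀ T, |u t| ≤ N * Real.exp (R * (t - t₀)) := by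
  set g : ℝ → ℝ := fun t => N * Real.exp (R * (t - t₀)) with hg
  have hmono : Monotone g := fun s t hst => by simp only [hg]; gcongr
  have hg₀ : g t₀ = N := by simp [hg]
  refine abs_le_of_mul_deriv_lt_at_touch (h.continuousOn_Icc le_rfl)
    (fun t ht => (h.hasDerivWithinAt t ht.1).mono (Ici_subset_Ici.2 ht.1)) (by fun_prop)
    (fun t _ => (hasDerivAt_mul_exp_mul_sub N R t₀ t).hasDerivWithinAt)
    (fun t _ => by positivity) (by simpa [hg] using hinit t₀ ⟨by linarith [h.delay_nonneg], le_rfl⟩)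
    fun t ht hbefore htouch => ?_
  have hhist : ∀ s ∈ Icc (t - r) t, |u s| ≤ g t := by
    intro s hs
    rcases le_total s t₀ with hst | hst
    · exact (hinit s ⟨by linarith [hs.1, ht.1], hst⟩).trans (hg₀ ▸ hmono ht.1)
    · exact (hbefore s ⟨hst, hs.2⟩).trans (hmono hs.2)
  have hF : |F t| ≤ (q + b + d + η) * g t :=
    h.abs_rhs_le hq hb hd ht.1 ((hmono ht.2.le).trans hNρ) hhist
  have hβt := hβB t (Ico_subset_Icc_self ht)
  have hB : 0 ≤ B := (abs_nonneg _).trans hβt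
  calc u t * (β t * F t) ≤ |u t| * (|β t| * |F t|) := by
        rw [← abs_mul, ← abs_mul]; exact le_abs_self _
    _ ≤ g t * (B * ((q + b + d + η) * g t)) := by rw [htouch]; gcongr
    _ = g t * (B * (q + b + d + η) * g t) := by ring
    _ < g t * (R * g t) := by gcongr

theorem mul_deriv_lt_neg_mul_sq (h : IsPerturbedDelaySolution q b d η ρ t₀ r β τ σ u F)
    (hq : 0 ≤ q) (hb : 0 ≤ b) (hd : 0 ≤ d) (hη : 0 ≤ η) {β₀ l E y : ℝ}
    (hβ : ContinuousOn β (Ici t₀)) (hβ₀ : 0 < β₀) (hβ₀le : ∀ s ≥ t₀, β₀ ≤ β s)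
    (ht : t₀ + r ≤ t) (hc : ∫ s in (t - σ t)..t, β s ≤ c) (hl : 0 < l)
    (hmargin : l < β₀ * stabilityMargin q b d η c E) (hy : 0 < y) (hEρ : E * y ≤ ρ)
    (hu : ∀ s ∈ Icc (t - 2 * r) t, |u s| ≤ E * y) (hut : |u t| = y) :
    u t * (β t * F t) < -l * y ^ 2 := by
  have ht₀ : t₀ ≤ t := by linarith [h.delay_nonneg]
  have hdiss : u t * F t ≤ -(stabilityMargin q b d η c E * y ^ 2) := by
    refine (h.mul_rhs_le hq hb hd hη hβ (fun s hs => hβ₀.le.trans (hβ₀le s hs))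
      ht hc hEρ hu).trans_eq ?_
    rw [hut, stabilityMargin]
    ring
  have hmargin0 : 0 < stabilityMargin q b d η c E :=
    pos_of_mul_pos_right (hl.trans hmargin) hβ₀.le
  calc u t * (β t * F t) = β t * (u t * F t) := by ring
    _ ≤ β t * -(stabilityMargin q b d η c E * y ^ 2) :=
        mul_le_mul_of_nonneg_left hdiss (hβ₀.le.trans (hβ₀le t ht₀))
    _ ≤ β₀ * -(stabilityMargin q b d η c E * y ^ 2) :=
        mul_le_mul_of_nonpos_right (hβ₀le t ht₀) (neg_nonpos.2 (by positivity))
    _ = -(β₀ * stabilityMargin q b d η c E) * y ^ 2 := by ring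
    _ < -l * y ^ 2 := by gcongr

theorem abs_le_decaying_exp (h : IsPerturbedDelaySolution q b d η ρ t₀ r β τ σ u F)
    (hq : 0 ≤ q) (hb : 0 ≤ b) (hd : 0 ≤ d) (hη : 0 ≤ η) {β₀ l A : ℝ}
    (hβ : ContinuousOn β (Ici t₀)) (hβ₀ : 0 < β₀) (hβ₀le : ∀ t ≥ t₀, β₀ ≤ β t) (hT : t₀ + r ≤ T)
    (hc : ∀ t ≥ T, ∫ s in (t - σ t)..t, β s ≤ c) (hl : 0 < l)
    (hmargin : l < β₀ * stabilityMargin q b d η c (Real.exp (l * (2 * r))))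
    (hA : 0 < A) (hAρ : Real.exp (l * (2 * r)) * A ≤ ρ)
    (hinit : ∀ s ∈ Icc (T - 2 * r) T, |u s| ≤ A) :
    ∀ t ≥ T, |u t| ≤ A * Real.exp (-l * (t - T)) := by
  intro t₁ ht₁
  have hr := h.delay_nonneg
  have hTt₀ : t₀ ≤ T := by linarith
  set g : ℝ → ℝ := fun t => A * Real.exp (-l * (t - T)) with hg
  have hanti : Antitone g := antitone_mul_exp_neg_mul_sub hA.le hl.le T
  have hgT : g T = A := by simp [hg]
  refine abs_le_of_mul_deriv_lt_at_touch (h.continuousOn_Icc hTt₀)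
    (fun t ht => (h.hasDerivWithinAt t (hTt₀.trans ht.1)).mono
      (Ici_subset_Ici.2 (hTt₀.trans ht.1))) (by fun_prop)
    (fun t _ => (hasDerivAt_mul_exp_mul_sub A (-l) T t).hasDerivWithinAt) (fun t _ => by positivity)
    ((hinit T ⟨by linarith, le_rfl⟩).trans_eq hgT.symm) (fun t ht hbefore htouch => ?_)
    t₁ (right_mem_Icc.2 ht₁)
  have hgt : 0 < g t := by positivity
  have hhist : ∀ s ∈ Icc (t - 2 * r) t, |u s| ≤ Real.exp (l * (2 * r)) * g t := by
    intro s hs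
    rw [← mul_exp_neg_mul_sub_sub]
    refine le_trans ?_ (hanti hs.1)
    rcases le_total s T with hsT | hTs
    · exact (hinit s ⟨by linarith [hs.1, ht.1], hsT⟩).trans (hgT ▸ hanti hsT)
    · exact hbefore s ⟨hTs, hs.2⟩
  have hsmall : Real.exp (l * (2 * r)) * g t ≤ ρ := by
    refine le_trans ?_ hAρ
    gcongr
    exact hgT ▸ hanti ht.1
  exact (h.mul_deriv_lt_neg_mul_sq hq hb hd hη hβ hβ₀ hβ₀le (hT.trans ht.1) (hc t ht.1) hl
    hmargin hgt hsmall hhist htouch).trans_eq (by ring)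

theorem abs_le_exp (h : IsPerturbedDelaySolution q b d η ρ t₀ r β τ σ u F)
    (hq : 0 ≤ q) (hb : 0 ≤ b) (hd : 0 ≤ d) (hη : 0 ≤ η) {β₀ l B R : ℝ}
    (hβ : ContinuousOn β (Ici t₀)) (hβ₀ : 0 < β₀) (hβ₀le : ∀ t ≥ t₀, β₀ ≤ β t)
    (hβB : ∀ t ∈ Icc t₀ T, |β t| ≤ B) (hR0 : 0 ≤ R) (hR : B * (q + b + d + η) < R)
    (hT : t₀ + r ≤ T) (hc : ∀ t ≥ T, ∫ s in (t - σ t)..t, β s ≤ c) (hl : 0 < l)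
    (hmargin : l < β₀ * stabilityMargin q b d η c (Real.exp (l * (2 * r))))
    (hN : 0 < N) (hNρ : Real.exp (l * (2 * r)) * (N * Real.exp (R * (T - t₀))) ≤ ρ)
    (hinit : ∀ s ∈ Icc (t₀ - r) t₀, |u s| ≤ N) (ht : t₀ ≤ t) :
    |u t| ≤ Real.exp ((R + l) * (T - t₀)) * Real.exp (-l * (t - t₀)) * N := by
  have hr := h.delay_nonneg
  set A := N * Real.exp (R * (T - t₀)) with hA
  have hA0 : 0 < A := by positivity
  have hAρ : A ≤ ρ := (le_mul_of_one_le_left hA0.le (Real.one_le_exp (by positivity))).trans hNρ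
  have hgrow : ∀ s ∈ Icc t₀ T, |u s| ≤ A := fun s hs =>
    (h.abs_le_growing_exp hq hb hd hβB hR0 hR hN hAρ hinit s hs).trans <| by
      simp only [hA]
      gcongr
      exact hs.2
  have hNA : N ≤ A := le_mul_of_one_le_right hN.le (Real.one_le_exp (mul_nonneg hR0 (by linarith)))
  have hstart : ∀ s ∈ Icc (T - 2 * r) T, |u s| ≤ A := fun s hs =>
    (le_total s t₀).elim (fun hst => (hinit s ⟨by linarith [hs.1], hst⟩).trans hNA)
      fun hst => hgrow s ⟨hst, hs.2⟩
  have hfactor : Real.exp ((R + l) * (T - t₀)) * Real.exp (-l * (t - t₀)) * N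
      = A * Real.exp (-l * (t - T)) := by
    rw [hA, mul_assoc N, ← Real.exp_add, ← Real.exp_add, mul_comm]
    ring_nf
  rw [hfactor]
  rcases le_total t T with htT | hTt
  · exact (hgrow t ⟨ht, htT⟩).trans
      (le_mul_of_one_le_right hA0.le (Real.one_le_exp (by nlinarith)))
  · exact h.abs_le_decaying_exp hq hb hd hη hβ hβ₀ hβ₀le hT hc hl hmargin hA0 hNρ hstart t hTt

theorem exists_local_exponential_bound (hq : 0 ≤ q) (hb : 0 ≤ b) (hd : 0 ≤ d) {β₀ : ℝ}
    (hβ : ContinuousOn β (Ici t₀)) (hβ₀ : 0 < β₀) (hβ₀le : ∀ t ≥ t₀, β₀ ≤ β t)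
    (hc : ∀ᶠ t in atTop, ∫ s in (t - σ t)..t, β s ≤ c)
    (hstable : 0 < stabilityMargin q b d 0 c 1) :
    ∃ η > 0, ∀ ρ > 0, ∃ ε > 0, ∃ M ≥ (1 : ℝ), ∃ l > 0, ∀ u F : ℝ → ℝ,
      IsPerturbedDelaySolution q b d η ρ t₀ r β τ σ u F →
      ∀ N ≤ ε, (∀ s ∈ Icc (t₀ - r) t₀, |u s| ≤ N) →
        ∀ t ≥ t₀, |u t| ≤ M * Real.exp (-l * (t - t₀)) * N := by
  obtain ⟨η, hη, l, hl, hmargin⟩ := exists_lt_mul_stabilityMargin hβ₀ hstable r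
  refine ⟨η, hη, fun ρ hρ => ?_⟩
  obtain ⟨T, hT⟩ := eventually_atTop.1 (hc.and (eventually_ge_atTop (max t₀ (t₀ + r))))
  obtain ⟨hTt₀, hTr⟩ := max_le_iff.1 (hT T le_rfl).2
  obtain ⟨B, hB⟩ := isCompact_Icc.exists_bound_of_continuousOn
    (hβ.mono (Icc_subset_Ici_self : Icc t₀ T ⊆ Ici t₀))
  set R := |B * (q + b + d + η)| + 1
  have hR0 : 0 ≤ R := by positivity
  have hR : B * (q + b + d + η) < R := (le_abs_self _).trans_lt (lt_add_one _)
  set C := Real.exp (l * (2 * r)) * Real.exp (R * (T - t₀)) with hC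
  have hC0 : 0 < C := by positivity
  refine ⟨ρ / C / 2, by positivity, Real.exp ((R + l) * (T - t₀)),
    Real.one_le_exp (mul_nonneg (by positivity) (sub_nonneg.2 hTt₀)), l, hl,
    fun u F h N hNε hinit t ht => ?_⟩
  have hN0 : 0 ≤ N := (abs_nonneg _).trans (hinit t₀ ⟨sub_le_self _ h.delay_nonneg, le_rfl⟩)
  have hNlt : N < ρ / C := hNε.trans_lt (half_lt_self (by positivity))
  -- The barriers must be positive, so `N`, which may vanish, is approached from above.
  have hlim : Tendsto (fun N' => Real.exp ((R + l) * (T - t₀)) * Real.exp (-l * (t - t₀)) * N')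
      (𝓝[>] N) (𝓝 (Real.exp ((R + l) * (T - t₀)) * Real.exp (-l * (t - t₀)) * N)) :=
    ((continuous_const_mul _).tendsto N).mono_left nhdsWithin_le_nhds
  refine ge_of_tendsto hlim ?_
  filter_upwards [Ioo_mem_nhdsGT hNlt] with N' hN'
  have hN'ρ : Real.exp (l * (2 * r)) * (N' * Real.exp (R * (T - t₀))) ≤ ρ := by
    have := (lt_div_iff₀ hC0).1 hN'.2
    rw [hC] at this
    linarith
  exact h.abs_le_exp hq hb hd hη.le hβ hβ₀ hβ₀le hB hR0 hR hTr (fun t ht => (hT t ht).1) hl hmargin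
    (hN0.trans_lt hN'.1) hN'ρ (fun s hs => (hinit s hs).trans hN'.1.le) ht

end IsPerturbedDelaySolution

theorem abs_mul_exp_neg_sub_linear_le {p a K m v w : ℝ} (hm : |a| * m ≤ 1) (hv : |v| ≤ m)
    (hw : |w| ≤ m) :
    |p * (K + v) * Real.exp (-a * (K + w)) - p * Real.exp (-a * K) * (K + v - a * K * w)|
      ≤ |p * Real.exp (-a * K)| * (|K| * a ^ 2 + 2 * |a|) * m ^ 2 := by
  have hm0 : 0 ≤ m := (abs_nonneg v).trans hv
  have haw : |-a * w| ≤ |a| * m := by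
    rw [abs_mul, abs_neg]
    gcongr
  have hfirst : |Real.exp (-a * w) - 1| ≤ 2 * (|a| * m) :=
    (Real.abs_exp_sub_one_le (haw.trans hm)).trans (by gcongr)
  have hsecond : |Real.exp (-a * w) - 1 - -a * w| ≤ (|a| * m) ^ 2 :=
    (Real.abs_exp_sub_one_sub_id_le (haw.trans hm)).trans (sq_le_sq.2 (haw.trans (le_abs_self _)))
  calc |p * (K + v) * Real.exp (-a * (K + w)) - p * Real.exp (-a * K) * (K + v - a * K * w)|
      = |p * Real.exp (-a * K) *
          (K * (Real.exp (-a * w) - 1 - -a * w) + v * (Real.exp (-a * w) - 1))| := by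
        rw [mul_add (-a) K w, Real.exp_add]
        ring_nf
    _ ≤ |p * Real.exp (-a * K)| * (|K| * (|a| * m) ^ 2 + m * (2 * (|a| * m))) := by
        rw [abs_mul]
        gcongr
        refine (abs_add_le _ _).trans ?_
        rw [abs_mul, abs_mul]
        gcongr
    _ = |p * Real.exp (-a * K)| * (|K| * a ^ 2 + 2 * |a|) * m ^ 2 := by
        rw [mul_pow, sq_abs]
        ring

namespace NicholsonSolution1

variable {p a δ t₀ r K : ℝ} {β τ σ x : ℝ → ℝ}

theorem abs_sub_le_sSup (hx : NicholsonSolution1 p a δ t₀ r β τ σ x) (K : ℝ) {s : ℝ}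
    (hs : s ∈ Icc (t₀ - r) t₀) :
    |x s - K| ≤ sSup ((fun s => |x s - K|) '' Icc (t₀ - r) t₀) :=
  le_csSup (isCompact_Icc.image_of_continuousOn
    ((hx.1.mono Icc_subset_Ici_self).sub continuousOn_const).abs).bddAbove ⟨s, hs, rfl⟩

theorem isPerturbedDelaySolution (hx : NicholsonSolution1 p a δ t₀ r β τ σ x)
    (hτ : MapsTo τ (Ici t₀) (Icc 0 r)) (hσ : MapsTo σ (Ici t₀) (Icc 0 r))
    (hK : p * Real.exp (-a * K) = δ) {η ρ : ℝ} (hρa : |a| * ρ ≤ 1)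
    (hρη : |δ| * (|K| * a ^ 2 + 2 * |a|) * ρ ≤ η) :
    IsPerturbedDelaySolution δ (δ * (a * K)) δ η ρ t₀ r β τ σ (fun t => x t - K)
      (fun t => p * x (t - τ t) * Real.exp (-a * x (t - σ t)) - δ * x t) where
  mapsTo_fst := hτ
  mapsTo_snd := hσ
  continuousOn := hx.1.sub continuousOn_const
  hasDerivWithinAt t ht := (hx.2.1 t ht).sub_const K
  abs_rhs_sub_linear_le t _ m hm huτ huσ := by
    have hm0 : 0 ≤ m := (abs_nonneg _).trans huτ
    have htaylor := abs_mul_exp_neg_sub_linear_le (p := p) (K := K)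
      ((mul_le_mul_of_nonneg_left hm (abs_nonneg a)).trans hρa) huτ huσ
    rw [add_sub_cancel, add_sub_cancel, hK] at htaylor
    calc |p * x (t - τ t) * Real.exp (-a * x (t - σ t)) - δ * x t
          - (δ * (x (t - τ t) - K) - δ * (a * K) * (x (t - σ t) - K) - δ * (x t - K))|
        = |p * x (t - τ t) * Real.exp (-a * x (t - σ t))
          - δ * (x (t - τ t) - a * K * (x (t - σ t) - K))| := by ring_nf
      _ ≤ |δ| * (|K| * a ^ 2 + 2 * |a|) * m ^ 2 := htaylor
      _ = |δ| * (|K| * a ^ 2 + 2 * |a|) * m * m := by ring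
      _ ≤ |δ| * (|K| * a ^ 2 + 2 * |a|) * ρ * m := by gcongr
      _ ≤ η * m := by gcongr

theorem exists_forall_isPerturbedDelaySolution (hτ : MapsTo τ (Ici t₀) (Icc 0 r))
    (hσ : MapsTo σ (Ici t₀) (Icc 0 r)) (hK : p * Real.exp (-a * K) = δ) {η : ℝ} (hη : 0 < η) :
    ∃ ρ > 0, ∀ x, NicholsonSolution1 p a δ t₀ r β τ σ x →
      IsPerturbedDelaySolution δ (δ * (a * K)) δ η ρ t₀ r β τ σ (fun t => x t - K)
        (fun t => p * x (t - τ t) * Real.exp (-a * x (t - σ t)) - δ * x t) := by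
  obtain ⟨ρ₁, hρ₁, hρ₁a⟩ := exists_pos_mul_lt one_pos |a|
  obtain ⟨ρ₂, hρ₂, hρ₂η⟩ := exists_pos_mul_lt hη (|δ| * (|K| * a ^ 2 + 2 * |a|))
  refine ⟨min ρ₁ ρ₂, lt_min hρ₁ hρ₂, fun x hx => hx.isPerturbedDelaySolution hτ hσ hK ?_ ?_⟩
  · exact (mul_le_mul_of_nonneg_left (min_le_left _ _) (by positivity)).trans hρ₁a.le
  · exact (mul_le_mul_of_nonneg_left (min_le_right _ _) (by positivity)).trans hρ₂η.le

end NicholsonSolution1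

theorem exists_stabilityMargin_pos_of_limsup_lt {α : Type*} {F : Filter α} {f : α → ℝ} {δ L : ℝ}
    (hδ : 0 < δ) (hL : 0 < L) (hbdd : IsBoundedUnder (· ≤ ·) F f)
    (hlimsup : limsup f F < 1 / (δ * (2 + L))) :
    ∃ c, 0 < stabilityMargin δ (δ * L) δ 0 c 1 ∧ ∀ᶠ t in F, f t ≤ c := by
  obtain ⟨c, hlimsup_lt, hc⟩ := exists_between hlimsup
  refine ⟨c, ?_, (eventually_lt_of_limsup_lt hlimsup_lt hbdd).mono fun t ht => ht.le⟩
  have hcL : c * (δ * (2 + L)) < 1 := (lt_div_iff₀ (by positivity)).1 hc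
  calc 0 < δ * L * (1 - c * (δ * (2 + L))) := mul_pos (by positivity) (sub_pos.2 hcL)
    _ = stabilityMargin δ (δ * L) δ 0 c 1 := by
      rw [stabilityMargin]
      ring

theorem isBoundedUnder_integral_window {β σ : ℝ → ℝ} {t₀ r B : ℝ} (hβ : ContinuousOn β (Ici t₀))
    (hB : ∀ t ∈ Ici t₀, β t ≤ B) (hσ : MapsTo σ (Ici t₀) (Icc 0 r)) :
    IsBoundedUnder (· ≤ ·) atTop fun t => ∫ s in (t - σ t)..t, β s := by
  refine isBoundedUnder_of_eventually_le (a := |B| * r) ?_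
  filter_upwards [eventually_ge_atTop t₀, eventually_ge_atTop (t₀ + r)] with t ht₀ ht
  obtain ⟨hσ0, hσr⟩ := hσ ht₀
  have hle : t - σ t ≤ t := sub_le_self t hσ0
  have hwin : Icc (t - σ t) t ⊆ Ici t₀ := fun s hs => mem_Ici.2 (by linarith [hs.1])
  calc ∫ s in (t - σ t)..t, β s
      ≤ ∫ _ in (t - σ t)..t, |B| :=
        intervalIntegral.integral_mono_on hle ((hβ.mono hwin).intervalIntegrable_of_Icc hle)
          intervalIntegrable_const fun s hs => (hB s (hwin hs)).trans (le_abs_self B)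
    _ = |B| * σ t := by
      rw [intervalIntegral.integral_const, smul_eq_mul]
      ring
    _ ≤ |B| * r := by gcongr

theorem mapsTo_Icc_of_isLUB_union {τ σ : ℝ → ℝ} {t₀ r : ℝ} (hτ : ∀ t ∈ Ici t₀, 0 ≤ τ t)
    (hσ : ∀ t ∈ Ici t₀, 0 ≤ σ t) (hr : IsLUB (τ '' Ici t₀ ∪ σ '' Ici t₀) r) :
    MapsTo τ (Ici t₀) (Icc 0 r) ∧ MapsTo σ (Ici t₀) (Icc 0 r) :=
  ⟨fun t ht => ⟨hτ t ht, hr.1 (Or.inl (mem_image_of_mem τ ht))⟩,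
    fun t ht => ⟨hσ t ht, hr.1 (Or.inr (mem_image_of_mem σ ht))⟩⟩

theorem nicholson_one_pair_local_exponential_stability_general
    (p a δ : ℝ) (hδ : 0 < δ) (hpδ : δ < p) (ha : 0 < a)
    (t₀ : ℝ) (β τ σ : ℝ → ℝ)
    (hβc : ContinuousOn β (Ici t₀))
    (hτ0 : ∀ t ∈ Ici t₀, 0 ≤ τ t) (hσ0 : ∀ t ∈ Ici t₀, 0 ≤ σ t)
    (βminus : ℝ) (hβminus : IsGLB (β '' Ici t₀) βminus) (hβmpos : 0 < βminus)
    (τbar : ℝ) (hτbar : IsLUB (τ '' Ici t₀ ∪ σ '' Ici t₀) τbar)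
    (K : ℝ) (hKdef : K = (1 / a) * Real.log (p / δ))
    (hbdd : IsBoundedUnder (· ≤ ·) atTop (fun t => ∫ s in (t - σ t)..t, β s))
    (hcond : limsup (fun t => ∫ s in (t - σ t)..t, β s) atTop
      < 1 / (δ * (2 + Real.log (p / δ)))) :
    ∃ ε > 0, ∃ M ≥ (1 : ℝ), ∃ lam > 0, ∀ x : ℝ → ℝ,
      NicholsonSolution1 p a δ t₀ τbar β τ σ x →
      sSup ((fun s => |x s - K|) '' Icc (t₀ - τbar) t₀) ≤ ε →
      ∀ t ∈ Ici t₀, |x t - K| ≤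
        M * Real.exp (-lam * (t - t₀)) *
          sSup ((fun s => |x s - K|) '' Icc (t₀ - τbar) t₀) := by
  have hp : 0 < p := hδ.trans hpδ
  have hlog : Real.log (p / δ) = a * K := by rw [hKdef]; field_simp
  have haK : 0 < a * K := hlog ▸ Real.log_pos ((one_lt_div hδ).2 hpδ)
  have hequilibrium : p * Real.exp (-a * K) = δ := by
    rw [neg_mul, ← hlog, Real.exp_neg, Real.exp_log (by positivity)]
    field_simp
  obtain ⟨hτ, hσ⟩ := mapsTo_Icc_of_isLUB_union hτ0 hσ0 hτbar
  have hβle : ∀ t ≥ t₀, βminus ≤ β t := fun t ht => hβminus.1 (mem_image_of_mem β ht)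
  obtain ⟨c, hstable, hc⟩ := exists_stabilityMargin_pos_of_limsup_lt hδ haK hbdd (hlog ▸ hcond)
  obtain ⟨η, hη, hlocal⟩ := IsPerturbedDelaySolution.exists_local_exponential_bound (r := τbar)
    (τ := τ) hδ.le (by positivity) hδ.le hβc hβmpos hβle hc hstable
  obtain ⟨ρ, hρ, hlinearize⟩ :=
    NicholsonSolution1.exists_forall_isPerturbedDelaySolution hτ hσ hequilibrium hη
  obtain ⟨ε, hε, M, hM, lam, hlam, hdecay⟩ := hlocal ρ hρ
  exact ⟨ε, hε, M, hM, lam, hlam, fun x hx hxε =>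
    hdecay _ _ (hlinearize x hx) _ hxε fun s hs => hx.abs_sub_le_sSup K hs⟩

/- STATEMENT 5 (Corollary 2.2): for the one-pair Nicholson equation with p > δ > 0,
   if ζ_M := limsup_{t→∞} ∫_{t−σ(t)}^t β(s) ds < 1/(δ(2 + log(p/δ))), then the
   positive equilibrium K = (1/a) log(p/δ) is locally exponentially stable. -/
theorem nicholson_one_pair_local_exponential_stability
    (p a δ : ℝ) (hδ : 0 < δ) (hpδ : δ < p) (ha : 0 < a)
    (t₀ : ℝ) (β τ σ : ℝ → ℝ)
    (hβc : ContinuousOn β (Set.Ici t₀))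
    (hτc : ContinuousOn τ (Set.Ici t₀)) (hσc : ContinuousOn σ (Set.Ici t₀))
    (hτ0 : ∀ t ∈ Set.Ici t₀, 0 ≤ τ t) (hσ0 : ∀ t ∈ Set.Ici t₀, 0 ≤ σ t)
    (βminus : ℝ) (hβminus : IsGLB (β '' Set.Ici t₀) βminus) (hβmpos : 0 < βminus)
    (hβub : ∃ B, ∀ t ∈ Set.Ici t₀, β t ≤ B)
    (τbar : ℝ) (hτbar : IsLUB (τ '' Set.Ici t₀ ∪ σ '' Set.Ici t₀) τbar)
    -- K = (1/a) log(p/δ)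
    (K : ℝ) (hKdef : K = (1 / a) * Real.log (p / δ))
    -- the stability condition
    (hcond : Filter.limsup (fun t => ∫ s in (t - σ t)..t, β s) Filter.atTop
      < 1 / (δ * (2 + Real.log (p / δ)))) :
    -- K is locally exponentially stable
    ∃ ε > 0, ∃ M ≥ (1 : ℝ), ∃ lam > 0, ∀ x : ℝ → ℝ,
      NicholsonSolution1 p a δ t₀ τbar β τ σ x →
      sSup ((fun s => |x s - K|) '' Set.Icc (t₀ - τbar) t₀) ≤ ε →
      ∀ t ∈ Set.Ici t₀, |x t - K| ≤
        M * Real.exp (-lam * (t - t₀)) *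
          sSup ((fun s => |x s - K|) '' Set.Icc (t₀ - τbar) t₀) := by
  obtain ⟨B, hB⟩ := hβub
  exact nicholson_one_pair_local_exponential_stability_general p a δ hδ hpδ ha t₀ β τ σ hβc hτ0 hσ0
    βminus hβminus hβmpos τbar hτbar K hKdef
    (isBoundedUnder_integral_window hβc hB (mapsTo_Icc_of_isLUB_union hτ0 hσ0 hτbar).2) hcond
end
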